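/- Let F_q be a finite field of characteristic two, let σ ∈ F_q have absolute trace 1 (i.e. Tr_{F_q/F_2}(σ) = 1), and let n > 1 be an integer. If q ≡ 1 (mod 3), then |𝓘(x^3 + σx + σ, x^2 + x + σ + 1, n, q)| = (1/(3 n_3)) (I(n/(2n_3), q^{2 n_3}) − I(n/(2n_3), 1)). If q ≡ −1 (mod 3), then |𝓘(x^3 + σx + σ, x^2 + x + σ + 1, n, q)| = (2/(3 n_3)) (I(n/n_3, q^{n_3}) − I(n/n_3, −1)). -/

import Mathlib

open Polynomial

/-- The transform `f_R` of a nonzero polynomial `f` by the rational expression `R = g/h`. -/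
noncomputable def ratTransform {K : Type*} [Field K] (g h f : K[X]) : K[X] :=
  ∑ i ∈ Finset.range (f.natDegree + 1), C (f.coeff i) * g ^ i * h ^ (f.natDegree - i)

/-- `𝓘(g,h,n,q)`: the set of monic irreducible polynomials `f` of degree `n` over the field
such that `f_R` is irreducible. -/
noncomputable def IrredSet {K : Type*} [Field K] (g h : K[X]) (n : ℕ) : Set K[X] :=
  {f | f.Monic ∧ Irreducible f ∧ f.natDegree = n ∧ Irreducible (ratTransform g h f)}

/-- `I(n,q) = (1/n) ∑_{d ∣ n} μ(d) q^{n/d}`, used formally for any rational `q`. -/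
noncomputable def Ifun (n : ℕ) (q : ℚ) : ℚ :=
  (1 / (n : ℚ)) * ∑ d ∈ n.divisors, ((ArithmeticFunction.moebius d : ℤ) : ℚ) * q ^ (n / d)

/-- `I(n/m, q)` with the convention that it is `0` when `m` does not divide `n`
(i.e. when `n/m` is not a positive integer). -/
noncomputable def IfunD (n m : ℕ) (q : ℚ) : ℚ := if m ∣ n then Ifun (n / m) q else 0

/-- `n₃`: the largest power of `3` dividing `n`. -/
def nThree (n : ℕ) : ℕ := 3 ^ (n.factorization 3)

/-!
Over a finite field `F_q`, suppose that a Möbius coordinate sending some `θ ∈ F_{q²} \ F_q` to `0`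
and `θ ^ q` to `∞` turns `R = g / h` into the cube map. The `q`-power Frobenius acts on this
coordinate as `b ↦ b ^ (-q)`, so that apart from `θ` and `θ ^ q` the points fixed by its `d`-th
power have as coordinates the roots of unity `b ≠ 1` with `b ^ |(-q) ^ d - 1| = 1`. If `a` is a
root of an irreducible `f` of degree `n` and `R(c) = a`, then `c` has degree `n`, `2n` or `3n`,
and `f_R` is irreducible exactly when the degree is `3n`, that is, when the coordinate of `a` is
not a cube in `F_{q^{2n}}`. Non-cubes among the fixed points are counted by a gcd, and Möbius
inversion isolates the points of degree `n`. For the polynomials at hand, `θ` is a root of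
`X² + X + σ`; the trace condition gives `θ ^ q = θ + 1`, by Artin–Schreier.
-/

section RatTransform

variable {F K : Type*} [Field F] [Field K] [Algebra F K] {f g h : F[X]}

theorem ratTransform_eq_pow_add_sum (hf : f.Monic) :
    ratTransform g h f = g ^ f.natDegree +
      ∑ i ∈ Finset.range f.natDegree, C (f.coeff i) * g ^ i * h ^ (f.natDegree - i) := by
  rw [ratTransform, Finset.sum_range_succ, add_comm]
  simp [hf.coeff_natDegree]

theorem degree_sum_mul_pow_mul_pow_lt (hg : g.Monic) (hgh : h.natDegree < g.natDegree)
    (a : ℕ → F) (n : ℕ) :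
    (∑ i ∈ Finset.range n, C (a i) * g ^ i * h ^ (n - i)).degree < (g ^ n).degree := by
  have hgn : (g ^ n).degree = (n * g.natDegree : ℕ) := by
    rw [degree_eq_natDegree (hg.pow n).ne_zero, hg.natDegree_pow]
  rw [hgn, ← mem_degreeLT]
  refine Submodule.sum_mem _ fun i hi ↦ mem_degreeLT.2 ?_
  have hin : 0 < n - i := Nat.sub_pos_of_lt (Finset.mem_range.1 hi)
  refine degree_le_natDegree.trans_lt (Nat.cast_lt.2 ?_)
  calc (C (a i) * g ^ i * h ^ (n - i)).natDegree
      ≤ i * g.natDegree + (n - i) * h.natDegree :=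
        natDegree_mul_le.trans (add_le_add
          ((natDegree_C_mul_le _ _).trans natDegree_pow_le) natDegree_pow_le)
    _ < i * g.natDegree + (n - i) * g.natDegree := by gcongr
    _ = n * g.natDegree := by
        rw [← add_mul, Nat.add_sub_cancel' (Finset.mem_range.1 hi).le]

theorem monic_ratTransform (hg : g.Monic) (hgh : h.natDegree < g.natDegree) (hf : f.Monic) :
    (ratTransform g h f).Monic := by
  rw [ratTransform_eq_pow_add_sum hf]
  exact (hg.pow _).add_of_left (degree_sum_mul_pow_mul_pow_lt hg hgh _ _)

theorem natDegree_ratTransform (hg : g.Monic) (hgh : h.natDegree < g.natDegree) (hf : f.Monic) :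
    (ratTransform g h f).natDegree = f.natDegree * g.natDegree := by
  rw [ratTransform_eq_pow_add_sum hf,
    natDegree_add_eq_left_of_degree_lt (degree_sum_mul_pow_mul_pow_lt hg hgh _ _),
    hg.natDegree_pow]

theorem aeval_ratTransform {a c : K} (hac : aeval c g = a * aeval c h) :
    aeval c (ratTransform g h f) = aeval c h ^ f.natDegree * aeval a f := by
  rw [ratTransform, map_sum, aeval_eq_sum_range (x := a), Finset.mul_sum]
  refine Finset.sum_congr rfl fun i hi ↦ ?_
  have hpow : aeval c h ^ f.natDegree = aeval c h ^ i * aeval c h ^ (f.natDegree - i) := by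
    rw [← pow_add, Nat.add_sub_cancel' (Finset.mem_range_succ_iff.1 hi)]
  rw [hpow, map_mul, map_mul, map_pow, map_pow, aeval_C, hac, Algebra.smul_def]
  ring

theorem irreducible_ratTransform_minpoly_iff (hg : g.Monic) (hgh : h.natDegree < g.natDegree)
    {a c : K} (ha : IsIntegral F a) (hac : aeval c g = a * aeval c h) :
    Irreducible (ratTransform g h (minpoly F a)) ↔
      (minpoly F c).natDegree = (minpoly F a).natDegree * g.natDegree := by
  have hmonic := monic_ratTransform hg hgh (minpoly.monic ha)
  have hdeg := natDegree_ratTransform hg hgh (minpoly.monic ha)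
  have hroot : aeval c (ratTransform g h (minpoly F a)) = 0 := by
    rw [aeval_ratTransform hac, minpoly.aeval, mul_zero]
  have hc : IsIntegral F c := ⟨_, hmonic, hroot⟩
  constructor
  · intro hirr
    rw [← minpoly.eq_of_irreducible_of_monic hirr hroot hmonic, hdeg]
  · intro hcdeg
    rw [eq_of_monic_of_dvd_of_natDegree_le (minpoly.monic hc) hmonic (minpoly.dvd F c hroot)
      (hdeg.trans hcdeg.symm).le]
    exact minpoly.irreducible hc

theorem natDegree_minpoly_le_of_aeval_eq_mul (hg : g.Monic) (hgh : h.natDegree < g.natDegree)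
    {a c : K} (ha : IsIntegral F a) (hac : aeval c g = a * aeval c h) :
    (minpoly F c).natDegree ≤ (minpoly F a).natDegree * g.natDegree := by
  have hmonic := monic_ratTransform hg hgh (minpoly.monic ha)
  rw [← natDegree_ratTransform hg hgh (minpoly.monic ha)]
  refine natDegree_le_of_dvd (minpoly.dvd F c ?_) hmonic.ne_zero
  rw [aeval_ratTransform hac, minpoly.aeval, mul_zero]

open IntermediateField in
theorem natDegree_minpoly_dvd_of_aeval_eq_mul {a c : K} (hc : IsIntegral F c)
    (hac : aeval c g = a * aeval c h) (hh : aeval c h ≠ 0) :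
    (minpoly F a).natDegree ∣ (minpoly F c).natDegree := by
  have ha : a ∈ F⟮c⟯ := by
    rw [eq_div_of_mul_eq hh hac.symm]
    exact div_mem (algebra_adjoin_le_adjoin F _ (aeval_mem_adjoin_singleton F c))
      (algebra_adjoin_le_adjoin F _ (aeval_mem_adjoin_singleton F c))
  have : FiniteDimensional F F⟮c⟯ := adjoin.finiteDimensional hc
  rw [← adjoin.finrank hc, show a = ((⟨a, ha⟩ : F⟮c⟯) : K) from rfl, ← minpoly_eq]
  exact minpoly.degree_dvd (Algebra.IsIntegral.isIntegral _)

end RatTransform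

section FiniteField

theorem finite_setOf_pow_eq_self {K : Type*} [Field K] {m : ℕ} (hm : 1 < m) :
    {a : K | a ^ m = a}.Finite := by
  have hne := FiniteField.X_pow_card_sub_X_ne_zero K hm
  refine (rootSet_finite (X ^ m - X : K[X]) K).subset fun a ha ↦ ?_
  simpa [mem_rootSet, hne, sub_eq_zero] using ha

variable {F K : Type*} [Field F] [Fintype F] [Field K] [Algebra F K]

theorem natDegree_minpoly_dvd_iff {x : K} (hx : IsIntegral F x) (k : ℕ) :
    (minpoly F x).natDegree ∣ k ↔ x ^ Fintype.card F ^ k = x := by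
  rw [(minpoly.irreducible hx).natDegree_dvd_iff_dvd_X_pow_card_pow_sub_X, minpoly.dvd_iff,
    Nat.card_eq_fintype_card]
  simp [sub_eq_zero]

theorem sum_divisors_ncard_natDegree_minpoly_eq [Algebra.IsAlgebraic F K] (P : K → Prop) {d : ℕ}
    (hd : d ≠ 0) :
    ∑ e ∈ d.divisors, {a : K | (minpoly F a).natDegree = e ∧ P a}.ncard =
      {a : K | a ^ Fintype.card F ^ d = a ∧ P a}.ncard := by
  classical
  have hdvd (a : K) := natDegree_minpoly_dvd_iff (Algebra.IsIntegral.isIntegral (R := F) a) d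
  have hfin : {a : K | a ^ Fintype.card F ^ d = a ∧ P a}.Finite :=
    (finite_setOf_pow_eq_self (Nat.one_lt_pow hd Fintype.one_lt_card)).subset fun a ha ↦ ha.1
  rw [Set.ncard_eq_toFinset_card _ hfin,
    Finset.card_eq_sum_card_fiberwise (f := fun a ↦ (minpoly F a).natDegree) (t := d.divisors)]
  · refine Finset.sum_congr rfl fun e he ↦ ?_
    rw [← Set.ncard_coe_finset]
    congr 1
    ext a
    have := Nat.dvd_of_mem_divisors he
    simp only [Finset.coe_filter, Set.Finite.mem_toFinset, Set.mem_ofPred_eq, ← hdvd]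
    grind
  · intro a ha
    simp_all

theorem ncard_natDegree_minpoly_eq_sum_moebius [Algebra.IsAlgebraic F K] (P : K → Prop) {n : ℕ}
    (hn : n ≠ 0) :
    ({a : K | (minpoly F a).natDegree = n ∧ P a}.ncard : ℚ) =
      ∑ x ∈ n.divisors, (ArithmeticFunction.moebius x : ℚ) *
        {a : K | a ^ Fintype.card F ^ (n / x) = a ∧ P a}.ncard := by
  have hsum : ∀ d > 0,
      ∑ e ∈ d.divisors, ({a : K | (minpoly F a).natDegree = e ∧ P a}.ncard : ℚ) =
        {a : K | a ^ Fintype.card F ^ d = a ∧ P a}.ncard := fun d hd ↦ by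
    exact_mod_cast sum_divisors_ncard_natDegree_minpoly_eq (F := F) P hd.ne'
  rw [← ArithmeticFunction.sum_eq_iff_sum_mul_moebius_eq.1 hsum n (Nat.pos_of_ne_zero hn),
    Nat.sum_divisorsAntidiagonal fun x d ↦ (ArithmeticFunction.moebius x : ℚ) *
      {a : K | a ^ Fintype.card F ^ d = a ∧ P a}.ncard]

end FiniteField

theorem finite_setOf_natDegree_eq (F : Type*) [Field F] [Finite F] (n : ℕ) :
    {f : F[X] | f.natDegree = n}.Finite := by
  have : Finite (degreeLT F (n + 1)) := Finite.of_equiv _ (degreeLTEquiv F (n + 1)).toEquiv.symm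
  refine (Set.toFinite (degreeLT F (n + 1) : Set F[X])).subset ?_
  rintro f rfl
  exact mem_degreeLT.2 (degree_le_natDegree.trans_lt (Nat.cast_lt.2 f.natDegree.lt_succ_self))

theorem ncard_setOf_minpoly_mem {F K : Type*} [Field F] [PerfectField F] [Field K] [Algebra F K]
    [IsAlgClosed K] {S : Set F[X]} {n : ℕ}
    (hS : ∀ f ∈ S, f.Monic ∧ Irreducible f ∧ f.natDegree = n) (hfin : S.Finite) :
    {a : K | minpoly F a ∈ S}.ncard = S.ncard * n := by
  have hfiber : ∀ f ∈ S, {a : K | minpoly F a = f} = f.rootSet K := fun f hf ↦ by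
    obtain ⟨hmonic, hirr, -⟩ := hS f hf
    ext a
    rw [mem_rootSet_of_ne hirr.ne_zero]
    exact ⟨fun ha ↦ ha ▸ minpoly.aeval F a,
      fun ha ↦ (minpoly.eq_of_irreducible_of_monic hirr ha hmonic).symm⟩
  have hcard : ∀ f ∈ S, {a : K | minpoly F a = f}.ncard = n := fun f hf ↦ by
    obtain ⟨-, hirr, hdeg⟩ := hS f hf
    rw [hfiber f hf, ← hdeg, ← card_rootSet_eq_natDegree (K := K)
      (PerfectField.separable_of_irreducible hirr) (IsAlgClosed.splits _),
      Set.ncard_eq_toFinset_card', Set.toFinset_card]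
  have hunion : {a : K | minpoly F a ∈ S} = ⋃ f ∈ S, {a : K | minpoly F a = f} := by
    ext a
    simp
  have hdisj : S.PairwiseDisjoint fun f ↦ {a : K | minpoly F a = f} := fun f _ f' _ hne ↦
    Set.disjoint_left.2 fun a ha ha' ↦ hne (ha.symm.trans ha')
  rw [hunion, hfin.ncard_biUnion (fun f hf ↦ hfiber f hf ▸ rootSet_finite f K) hdisj,
    finsum_mem_congr rfl hcard, finsum_mem_eq_finite_toFinset_sum _ hfin, Finset.sum_const,
    ← Set.ncard_eq_toFinset_card S hfin, smul_eq_mul]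

section QuadraticCoord

/-- The Möbius coordinate `a ↦ (a - θ) / (a - θ ^ q)` that sends `θ` and its conjugate over `F_q` to
`0` and `∞`. The field `F` is an explicit argument because it supplies `q`; at the pole `θ ^ q` the
coordinate has the junk value `0`, so it is nonzero exactly off `θ` and `θ ^ q`. -/
noncomputable def quadraticCoord (F : Type*) {K : Type*} [Fintype F] [Field K] (θ a : K) : K :=
  (a - θ) / (a - θ ^ Fintype.card F)

variable {F K : Type*} [Fintype F] [Field K] {θ : K}

theorem quadraticCoord_ne_zero_iff {a : K} :
    quadraticCoord F θ a ≠ 0 ↔ a ≠ θ ∧ a ≠ θ ^ Fintype.card F := by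
  simp [quadraticCoord, sub_eq_zero]

theorem injOn_quadraticCoord (hθ : θ ^ Fintype.card F ≠ θ) :
    Set.InjOn (quadraticCoord F θ) {a | quadraticCoord F θ a ≠ 0} := by
  intro a ha b hb h
  have hpole {x : K} (hx : quadraticCoord F θ x ≠ 0) : x - θ ^ Fintype.card F ≠ 0 :=
    sub_ne_zero.2 (quadraticCoord_ne_zero_iff.1 hx).2
  rw [quadraticCoord, quadraticCoord, div_eq_div_iff (hpole ha) (hpole hb)] at h
  exact mul_right_cancel₀ (sub_ne_zero.2 hθ) (by linear_combination -h)

theorem exists_quadraticCoord_eq (hθ : θ ^ Fintype.card F ≠ θ) {b : K} (hb : b ≠ 1) :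
    ∃ a, quadraticCoord F θ a = b := by
  set θ' := θ ^ Fintype.card F with hθ'
  have hb' : 1 - b ≠ 0 := sub_ne_zero.2 hb.symm
  have hzero : (θ - b * θ') / (1 - b) - θ = b * ((θ - θ') / (1 - b)) := by field_simp; ring
  have hpole : (θ - b * θ') / (1 - b) - θ' = (θ - θ') / (1 - b) := by field_simp; ring
  refine ⟨(θ - b * θ') / (1 - b), ?_⟩
  rw [quadraticCoord, ← hθ', hzero, hpole]
  exact mul_div_cancel_right₀ b (div_ne_zero (sub_ne_zero.2 hθ.symm) hb')

variable [Field F] [Algebra F K]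

theorem quadraticCoord_pow_card (hθ : θ ^ Fintype.card F ^ 2 = θ) (a : K) :
    quadraticCoord F θ (a ^ Fintype.card F) = (quadraticCoord F θ a ^ Fintype.card F)⁻¹ := by
  have hsub (x y : K) : (x - y) ^ Fintype.card F = x ^ Fintype.card F - y ^ Fintype.card F :=
    map_sub (FiniteField.frobeniusAlgHom F K) x y
  rw [quadraticCoord, quadraticCoord, div_pow, inv_div, hsub, hsub, ← pow_mul, ← sq, hθ]

theorem quadraticCoord_pow_card_pow (hθ : θ ^ Fintype.card F ^ 2 = θ) (a : K) (d : ℕ) :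
    quadraticCoord F θ (a ^ Fintype.card F ^ d) =
      quadraticCoord F θ a ^ (-(Fintype.card F : ℤ)) ^ d := by
  induction d with
  | zero => simp
  | succ d ih =>
    rw [pow_succ, pow_mul, quadraticCoord_pow_card hθ, ih, pow_succ, zpow_mul, zpow_neg,
      zpow_natCast]

theorem pow_card_pow_eq_self_iff (hθ : θ ^ Fintype.card F ≠ θ) (hθ₂ : θ ^ Fintype.card F ^ 2 = θ)
    {a : K} (ha : quadraticCoord F θ a ≠ 0) (d : ℕ) :
    a ^ Fintype.card F ^ d = a ↔
      quadraticCoord F θ a ^ ((-(Fintype.card F : ℤ)) ^ d - 1).natAbs = 1 := by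
  have hinj : quadraticCoord F θ (a ^ Fintype.card F ^ d) = quadraticCoord F θ a ↔
      a ^ Fintype.card F ^ d = a := by
    refine ⟨fun h ↦ injOn_quadraticCoord hθ ?_ ha h, fun h ↦ by rw [h]⟩
    rw [Set.mem_ofPred_eq, h]
    exact ha
  have hunits := pow_natAbs_eq_one (a := Units.mk0 _ ha) (n := (-(Fintype.card F : ℤ)) ^ d - 1)
  simp only [Units.ext_iff, Units.val_pow_eq_pow_val, Units.val_zpow_eq_zpow_val, Units.val_mk0,
    Units.val_one] at hunits
  rw [← hinj, quadraticCoord_pow_card_pow hθ₂, hunits, zpow_sub_one₀ ha, mul_inv_eq_one₀ ha]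

end QuadraticCoord

section Count

theorem ncard_setOf_pow_eq_one {K : Type*} [Field K] [IsSepClosed K] {m : ℕ} (hm : (m : K) ≠ 0) :
    {b : K | b ^ m = 1}.ncard = m := by
  have : NeZero (m : K) := ⟨hm⟩
  have hpos : 0 < m := Nat.pos_of_ne_zero fun h ↦ hm (by simp [h])
  obtain ⟨ζ, hζ⟩ := HasEnoughRootsOfUnity.exists_primitiveRoot K m
  have hroots : {b : K | b ^ m = 1} = nthRootsFinset m (1 : K) := by
    ext b
    simp [mem_nthRootsFinset hpos]
  rw [hroots, Set.ncard_coe_finset, hζ.card_nthRootsFinset]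

theorem ncard_setOf_pow_eq_one_and_pow_ne_one {K : Type*} [Field K] [IsSepClosed K] {m : ℕ}
    (hm : (m : K) ≠ 0) (k : ℕ) :
    {b : K | b ^ m = 1 ∧ b ^ k ≠ 1}.ncard = m - m.gcd k := by
  have hgcd : ((m.gcd k : ℕ) : K) ≠ 0 := fun h ↦ hm <| by
    obtain ⟨j, hj⟩ := Nat.gcd_dvd_left m k
    rw [hj, Nat.cast_mul, h, zero_mul]
  have hdiff : {b : K | b ^ m = 1 ∧ b ^ k ≠ 1} = {b | b ^ m = 1} \ {b | b ^ m.gcd k = 1} := by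
    ext b
    simp only [Set.mem_ofPred_eq, Set.mem_sdiff, pow_gcd_eq_one]
    tauto
  have hsub : {b : K | b ^ m.gcd k = 1} ⊆ {b | b ^ m = 1} := fun b hb ↦
    (pow_gcd_eq_one.1 hb).1
  have hfin : {b : K | b ^ m.gcd k = 1}.Finite :=
    Set.finite_of_ncard_ne_zero <| by
      rw [ncard_setOf_pow_eq_one hgcd]
      exact fun h ↦ hgcd (by simp [h])
  rw [hdiff, Set.ncard_sdiff hsub hfin, ncard_setOf_pow_eq_one hm, ncard_setOf_pow_eq_one hgcd]

variable {F K : Type*} [Field F] [Fintype F] [Field K] [Algebra F K] {θ : K}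

theorem ncard_fixed_quadraticCoord_pow_ne_one [IsSepClosed K] (hθ : θ ^ Fintype.card F ≠ θ)
    (hθ₂ : θ ^ Fintype.card F ^ 2 = θ) {d : ℕ} (hd : d ≠ 0) (k : ℕ) :
    {a : K | a ^ Fintype.card F ^ d = a ∧
        (quadraticCoord F θ a ≠ 0 ∧ quadraticCoord F θ a ^ k ≠ 1)}.ncard =
      ((-(Fintype.card F : ℤ)) ^ d - 1).natAbs -
        ((-(Fintype.card F : ℤ)) ^ d - 1).natAbs.gcd k := by
  set m := ((-(Fintype.card F : ℤ)) ^ d - 1).natAbs with hm_def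
  have hcard : (Fintype.card F : K) = 0 := by
    rw [← map_natCast (algebraMap F K), FiniteField.cast_card_eq_zero, map_zero]
  have hm : (m : K) ≠ 0 := by
    rw [hm_def, Nat.cast_natAbs]
    rcases abs_choice ((-(Fintype.card F : ℤ)) ^ d - 1) with h | h <;> simp [h, hcard, hd]
  rw [← ncard_setOf_pow_eq_one_and_pow_ne_one hm k,
    ← ((injOn_quadraticCoord hθ).mono fun a ha ↦ ha.2.1).ncard_image]
  congr 1
  ext b
  constructor
  · rintro ⟨a, ⟨hfix, ha, hk⟩, rfl⟩
    exact ⟨(pow_card_pow_eq_self_iff hθ hθ₂ ha d).1 hfix, hk⟩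
  · rintro ⟨hbm, hbk⟩
    have hb0 : b ≠ 0 := by
      rintro rfl
      simp [zero_pow (fun h ↦ hm (by simp [h]) : m ≠ 0)] at hbm
    obtain ⟨a, rfl⟩ := exists_quadraticCoord_eq hθ (b := b) (by rintro rfl; simp at hbk)
    exact ⟨a, ⟨(pow_card_pow_eq_self_iff hθ hθ₂ hb0 d).2 hbm, hb0, hbk⟩, rfl⟩

end Count

section TwistedCube

/-- The rational function `R = g / h` is conjugate to the cube map over the quadratic extension of
`F = F_q`: `θ` generates that extension, and `R` becomes `b ↦ b ^ 3` in the coordinate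
`quadraticCoord F θ`. Only the identity at `θ` is recorded, the one at `θ ^ q` being its
Frobenius conjugate. -/
structure IsTwistedCube {F K : Type*} [Field F] [Fintype F] [Field K] [Algebra F K] (g h : F[X])
    (θ : K) : Prop where
  pow_card_ne : θ ^ Fintype.card F ≠ θ
  pow_card_sq : θ ^ Fintype.card F ^ 2 = θ
  map_sub_eq : g.map (algebraMap F K) - C θ * h.map (algebraMap F K) = (X - C θ) ^ 3

variable {F K : Type*} [Field F] [Fintype F] [Field K] [Algebra F K] {g h : F[X]} {θ : K}

namespace IsTwistedCube

theorem map_sub_conj_eq (H : IsTwistedCube g h θ) :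
    g.map (algebraMap F K) - C (θ ^ Fintype.card F) * h.map (algebraMap F K) =
      (X - C (θ ^ Fintype.card F)) ^ 3 := by
  have hfrob := congrArg (Polynomial.map (FiniteField.frobeniusAlgHom F K : K →+* K)) H.map_sub_eq
  simpa only [Polynomial.map_sub, Polynomial.map_mul, Polynomial.map_pow, map_C, map_X, map_map,
    AlgHom.comp_algebraMap, RingHom.coe_coe, FiniteField.coe_frobeniusAlgHom] using hfrob

theorem degree_lt (H : IsTwistedCube g h θ) : h.degree < 3 := by
  have hmonic (c : K) : ((X - C c) ^ 3).Monic := (monic_X_sub_C c).pow 3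
  have hdeg (c : K) : ((X - C c) ^ 3).degree = 3 := by simp [degree_pow]
  have hsub : C (θ ^ Fintype.card F - θ) * h.map (algebraMap F K) =
      (X - C θ) ^ 3 - (X - C (θ ^ Fintype.card F)) ^ 3 := by
    rw [← H.map_sub_eq, ← H.map_sub_conj_eq, C_sub]
    ring
  have hlt := degree_sub_lt_left ((hdeg θ).trans (hdeg (θ ^ Fintype.card F)).symm)
    (hmonic θ).ne_zero ((hmonic θ).trans (hmonic _).symm)
  rwa [← hsub, degree_C_mul (sub_ne_zero.2 H.pow_card_ne), degree_map, hdeg] at hlt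

theorem degree_C_mul_map_lt (H : IsTwistedCube g h θ) (a : K) :
    (C a * h.map (algebraMap F K)).degree < 3 := by
  refine (degree_mul_le _ _).trans_lt ((add_le_add_left degree_C_le _).trans_lt ?_)
  rw [zero_add, degree_map]
  exact H.degree_lt

theorem monic_and_natDegree_eq (H : IsTwistedCube g h θ) : g.Monic ∧ g.natDegree = 3 := by
  have hg : g.map (algebraMap F K) = (X - C θ) ^ 3 + C θ * h.map (algebraMap F K) := by
    rw [← H.map_sub_eq, sub_add_cancel]
  have hdeg : ((X - C θ) ^ 3).degree = 3 := by simp [degree_pow]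
  have hlt : (C θ * h.map (algebraMap F K)).degree < ((X - C θ) ^ 3).degree := by
    rw [hdeg]
    exact H.degree_C_mul_map_lt θ
  constructor
  · rw [← monic_map_iff (f := algebraMap F K), hg]
    exact ((monic_X_sub_C θ).pow 3).add_of_left hlt
  · rw [← natDegree_map (algebraMap F K), hg, natDegree_add_eq_left_of_degree_lt hlt,
      natDegree_eq_of_degree_eq_some hdeg]

theorem natDegree_lt (H : IsTwistedCube g h θ) : h.natDegree < g.natDegree := by
  rw [H.monic_and_natDegree_eq.2]
  rcases eq_or_ne h 0 with rfl | hh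
  · simp
  · exact (natDegree_lt_iff_degree_lt hh).2 H.degree_lt

theorem sub_pow_three_eq (H : IsTwistedCube g h θ) {a c : K} (hac : aeval c g = a * aeval c h) :
    (c - θ) ^ 3 = (a - θ) * aeval c h ∧
      (c - θ ^ Fintype.card F) ^ 3 = (a - θ ^ Fintype.card F) * aeval c h := by
  have hθ := congrArg (eval c) H.map_sub_eq
  have hθ' := congrArg (eval c) H.map_sub_conj_eq
  simp only [eval_sub, eval_mul, eval_C, eval_pow, eval_X, eval_map_algebraMap, hac] at hθ hθ'
  exact ⟨by rw [← hθ]; ring, by rw [← hθ']; ring⟩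

theorem aeval_denom_ne_zero (H : IsTwistedCube g h θ) {a c : K}
    (hac : aeval c g = a * aeval c h) : aeval c h ≠ 0 := by
  intro h0
  obtain ⟨hθ, hθ'⟩ := H.sub_pow_three_eq hac
  rw [h0, mul_zero, pow_eq_zero_iff three_ne_zero, sub_eq_zero] at hθ hθ'
  exact H.pow_card_ne (hθ'.symm.trans hθ)

theorem quadraticCoord_pow_three (H : IsTwistedCube g h θ) {a c : K}
    (hac : aeval c g = a * aeval c h) :
    quadraticCoord F θ c ^ 3 = quadraticCoord F θ a := by
  obtain ⟨hθ, hθ'⟩ := H.sub_pow_three_eq hac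
  rw [quadraticCoord, div_pow, hθ, hθ', mul_div_mul_right _ _ (H.aeval_denom_ne_zero hac),
    quadraticCoord]

theorem exists_aeval_eq_mul [IsAlgClosed K] (H : IsTwistedCube g h θ) (a : K) :
    ∃ c, aeval c g = a * aeval c h := by
  set p := g.map (algebraMap F K) - C a * h.map (algebraMap F K) with hp
  obtain ⟨hg, hg3⟩ := H.monic_and_natDegree_eq
  have hgdeg : (g.map (algebraMap F K)).degree = 3 := by
    rw [degree_map, degree_eq_natDegree hg.ne_zero, hg3, Nat.cast_ofNat]
  have hlt : (C a * h.map (algebraMap F K)).degree < (g.map (algebraMap F K)).degree := by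
    rw [hgdeg]
    exact H.degree_C_mul_map_lt a
  have hdeg : p.degree ≠ 0 := by
    rw [hp, degree_sub_eq_left_of_degree_lt hlt, hgdeg]
    exact three_ne_zero
  obtain ⟨c, hc⟩ := IsAlgClosed.exists_root p hdeg
  exact ⟨c, by simpa [hp, sub_eq_zero, eval_map_algebraMap] using hc⟩

theorem irreducible_iff_pow_card_pow_ne [Algebra.IsAlgebraic F K] (H : IsTwistedCube g h θ)
    {a c : K} (hac : aeval c g = a * aeval c h) :
    Irreducible (ratTransform g h (minpoly F a)) ↔
      c ^ Fintype.card F ^ (2 * (minpoly F a).natDegree) ≠ c := by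
  have hint (x : K) : IsIntegral F x := Algebra.IsIntegral.isIntegral x
  obtain ⟨hg, hg3⟩ := H.monic_and_natDegree_eq
  have hle := natDegree_minpoly_le_of_aeval_eq_mul hg H.natDegree_lt (hint a) hac
  have hdvd := natDegree_minpoly_dvd_of_aeval_eq_mul (hint c) hac (H.aeval_denom_ne_zero hac)
  have hpos := minpoly.natDegree_pos (hint a)
  have hpos' := minpoly.natDegree_pos (hint c)
  rw [irreducible_ratTransform_minpoly_iff hg H.natDegree_lt (hint a) hac, Ne,
    ← natDegree_minpoly_dvd_iff (hint c)]
  rw [hg3] at hle ⊢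
  generalize (minpoly F a).natDegree = n at *
  obtain ⟨e, he⟩ := hdvd
  rw [he] at hle hpos' ⊢
  rw [mul_comm 2 n, Nat.mul_dvd_mul_iff_left hpos, mul_right_inj' hpos.ne']
  have he3 : e ≤ 3 := Nat.le_of_mul_le_mul_left hle hpos
  have he0 : 0 < e := Nat.pos_of_mul_pos_left hpos'
  interval_cases e <;> decide

/-- With `n` the degree of `a`, the condition `b ^ ((q ^ (2n) - 1) / 3) ≠ 1` on the coordinate `b`
of `a` says that `b` is not a cube in `F_{q ^ (2n)}`. -/
theorem irreducible_iff_quadraticCoord [IsAlgClosed K] [Algebra.IsAlgebraic F K]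
    (H : IsTwistedCube g h θ) {a : K} {k : ℕ}
    (hk : 3 * k = Fintype.card F ^ (2 * (minpoly F a).natDegree) - 1) :
    Irreducible (ratTransform g h (minpoly F a)) ↔
      quadraticCoord F θ a ≠ 0 ∧ quadraticCoord F θ a ^ k ≠ 1 := by
  obtain ⟨c, hac⟩ := H.exists_aeval_eq_mul a
  have hcube := H.quadraticCoord_pow_three hac
  rw [H.irreducible_iff_pow_card_pow_ne hac]
  rcases eq_or_ne (quadraticCoord F θ c) 0 with hc | hc
  · have hfix₂ : c ^ Fintype.card F ^ 2 = c := by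
      have hcθ := mt quadraticCoord_ne_zero_iff.2 (not_not.2 hc)
      rcases not_and_or.1 hcθ with hcθ | hcθ <;> rw [not_ne_iff.1 hcθ]
      · exact H.pow_card_sq
      · rw [pow_right_comm, H.pow_card_sq]
    have hint := Algebra.IsIntegral.isIntegral (R := F) c
    have hfix : c ^ Fintype.card F ^ (2 * (minpoly F a).natDegree) = c :=
      (natDegree_minpoly_dvd_iff hint _).1
        (((natDegree_minpoly_dvd_iff hint 2).2 hfix₂).mul_right _)
    simp [← hcube, hc, hfix]
  · have hnat : ((-(Fintype.card F : ℤ)) ^ (2 * (minpoly F a).natDegree) - 1).natAbs = 3 * k := by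
      rw [(even_two_mul _).neg_pow, hk, ← Nat.cast_pow, ← Nat.cast_pred (by positivity),
        Int.natAbs_natCast]
    rw [Ne, pow_card_pow_eq_self_iff H.pow_card_ne H.pow_card_sq hc, hnat, pow_mul, hcube]
    simp [← hcube, hc]

end IsTwistedCube

end TwistedCube

section Arithmetic

theorem prime_dvd_geom_sum_iff {p : ℕ} (hp : p.Prime) {R : ℤ} {k : ℕ} (hk : (p : ℤ) ∣ R ^ k - 1) :
    (p : ℤ) ∣ ∑ i ∈ Finset.range k, R ^ i ↔ ¬((p : ℤ) ∣ R - 1 ∧ ¬p ∣ k) := by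
  by_cases hR : (p : ℤ) ∣ R - 1
  · have hiff := dvd_geom_sum₂_iff_of_dvd_sub (n := k) hR
    simp only [one_pow, mul_one] at hiff
    simp [hiff, hR, Int.natCast_dvd_natCast]
  · rw [← mul_geom_sum] at hk
    simp [((Nat.prime_iff_prime_int.1 hp).dvd_or_dvd hk).resolve_left hR, hR]

theorem prime_mul_gcd_of_mul_eq_mul {p m j E : ℕ} (hp : p.Prime) (h : m * j = p * E) :
    p * m.gcd E = if p ∣ j then p * m else m := by
  rw [← Nat.gcd_mul_left, ← h, mul_comm p m, Nat.gcd_mul_left]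
  split_ifs with hj
  · rw [Nat.gcd_eq_left hj]
  · rw [(hp.coprime_iff_not_dvd.2 hj).gcd_eq_one, mul_one]

theorem natAbs_sub_gcd_eq_ite {p : ℕ} (hp : p.Prime) {R : ℤ} {k E : ℕ}
    (hE : R ^ k - 1 = p * E) :
    (((R - 1).natAbs - (R - 1).natAbs.gcd E : ℕ) : ℚ) =
      if (p : ℤ) ∣ R - 1 ∧ ¬p ∣ k then (1 - 1 / (p : ℚ)) * (R - 1).natAbs else 0 := by
  have hp0 : (p : ℚ) ≠ 0 := by exact_mod_cast hp.ne_zero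
  have hprod : (R - 1).natAbs * (∑ i ∈ Finset.range k, R ^ i).natAbs = p * E := by
    rw [← Int.natAbs_mul, mul_geom_sum, hE]
    simp [Int.natAbs_mul]
  have hgcd := prime_mul_gcd_of_mul_eq_mul hp hprod
  simp only [← Int.natCast_dvd, prime_dvd_geom_sum_iff hp (Dvd.intro _ hE.symm), ite_not] at hgcd
  split_ifs at hgcd ⊢ with hdvd
  · generalize (R - 1).natAbs.gcd E = t at hgcd ⊢
    rw [← hgcd, Nat.cast_sub (Nat.le_mul_of_pos_left _ hp.pos), Nat.cast_mul]
    field_simp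
  · rw [Nat.eq_of_mul_eq_mul_left hp.pos hgcd, Nat.sub_self, Nat.cast_zero]

theorem natAbs_neg_pow_sub_one {q : ℕ} (hq : q ≠ 0) (d : ℕ) :
    (((-(q : ℤ)) ^ d - 1).natAbs : ℚ) = (q : ℚ) ^ d - (-1) ^ d := by
  have hpow : 1 ≤ (q : ℤ) ^ d := one_le_pow₀ (by exact_mod_cast Nat.one_le_iff_ne_zero.2 hq)
  rw [Nat.cast_natAbs]
  rcases d.even_or_odd with hd | hd
  · rw [hd.neg_pow, hd.neg_one_pow, abs_of_nonneg (sub_nonneg.2 hpow)]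
    push_cast
    ring
  · rw [hd.neg_pow, hd.neg_one_pow, abs_of_neg (by linarith)]
    push_cast
    ring

theorem filter_not_prime_dvd_divisors {p n : ℕ} (hp : p.Prime) (hn : n ≠ 0) :
    {x ∈ n.divisors | ¬p ∣ x} = (n / p ^ n.factorization p).divisors := by
  ext x
  have hcompl : n / p ^ n.factorization p ≠ 0 := (Nat.ordCompl_pos p hn).ne'
  simp only [Finset.mem_filter, Nat.mem_divisors, hn, hcompl, ne_eq, not_false_eq_true, and_true]
  constructor
  · rintro ⟨hx, hpx⟩
    rw [← Nat.ordProj_mul_ordCompl_eq_self n p] at hx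
    exact ((hp.coprime_iff_not_dvd.2 hpx).symm.pow_right _).dvd_of_dvd_mul_left hx
  · exact fun hx ↦ ⟨hx.trans (Nat.ordCompl_dvd n p),
      fun hpx ↦ Nat.not_dvd_ordCompl hp hn (hpx.trans hx)⟩

theorem mem_divisors_div_iff {N n x : ℕ} (hn : n ≠ 0) (hN : N ∣ n) :
    x ∈ (n / N).divisors ↔ N * x ∣ n := by
  rw [Nat.mem_divisors, Nat.dvd_div_iff_mul_dvd hN,
    and_iff_left (Nat.div_ne_zero_iff_of_dvd hN |>.2 ⟨hn, ne_zero_of_dvd_ne_zero hn hN⟩)]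

theorem filter_dvd_div_divisors_div {c N n : ℕ} (hcN : c.Coprime N) (hn : n ≠ 0) (hN : N ∣ n) :
    {x ∈ (n / N).divisors | c ∣ n / x} =
      if c * N ∣ n then (n / (c * N)).divisors else ∅ := by
  have hmem (x : ℕ) : x ∈ {x ∈ (n / N).divisors | c ∣ n / x} ↔ c * N * x ∣ n := by
    rw [← hcN.lcm_eq_mul, ← Nat.lcm_mul_right, Nat.lcm_dvd_iff, and_comm, Finset.mem_filter,
      mem_divisors_div_iff hn hN]
    refine and_congr_right fun hx ↦ ?_
    rw [Nat.dvd_div_iff_mul_dvd (dvd_of_mul_left_dvd hx), mul_comm]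
  ext x
  rw [hmem]
  split_ifs with hdvd
  · exact (mem_divisors_div_iff hn hdvd).symm
  · simpa using fun h ↦ hdvd (dvd_of_mul_right_dvd h)

theorem sum_divisors_moebius_mul_pow_div {N n : ℕ} (hn : n ≠ 0) (hN : N ∣ n) (r : ℚ) :
    ∑ x ∈ (n / N).divisors, (ArithmeticFunction.moebius x : ℚ) * r ^ (n / x) =
      (n / N : ℚ) * Ifun (n / N) (r ^ N) := by
  obtain ⟨m, rfl⟩ := hN
  obtain ⟨hN0, hm0⟩ := mul_ne_zero_iff.1 hn
  have hNQ : (N : ℚ) ≠ 0 := Nat.cast_ne_zero.2 hN0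
  have hmQ : (m : ℚ) ≠ 0 := Nat.cast_ne_zero.2 hm0
  rw [Nat.mul_div_cancel_left m (Nat.pos_of_ne_zero hN0), Nat.cast_mul,
    mul_div_cancel_left₀ _ hNQ, Ifun, ← mul_assoc, mul_one_div_cancel hmQ, one_mul]
  refine Finset.sum_congr rfl fun x hx ↦ ?_
  rw [Nat.mul_div_assoc N (Nat.dvd_of_mem_divisors hx), pow_mul]

theorem three_dvd_pow_two_mul_sub_one {q : ℕ} (hq : ¬3 ∣ q) (n : ℕ) : 3 ∣ q ^ (2 * n) - 1 := by
  have hq0 : 0 < q := Nat.pos_of_ne_zero (by rintro rfl; simp at hq)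
  have hsq : q ^ 2 ≡ 1 [MOD 3] :=
    Nat.ModEq.pow_totient (Nat.prime_three.coprime_iff_not_dvd.2 hq).symm
  rw [pow_mul]
  refine (Nat.modEq_iff_dvd' (Nat.one_le_pow _ _ (pow_pos hq0 2))).1 ?_
  simpa using (hsq.pow n).symm

theorem three_dvd_neg_pow_sub_one_iff {q : ℕ} (hq : q % 3 = 1) (d : ℕ) :
    (3 : ℤ) ∣ (-(q : ℤ)) ^ d - 1 ↔ 2 ∣ d := by
  have hmod : (3 : ℤ) ∣ (-(q : ℤ)) ^ d - (-1) ^ d :=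
    (show (3 : ℤ) ∣ -(q : ℤ) - -1 by omega).trans (sub_dvd_pow_sub_pow _ _ _)
  generalize (-(q : ℤ)) ^ d = t at *
  rcases d.even_or_odd with hd | hd <;> rw [hd.neg_one_pow] at hmod
  · exact iff_of_true hmod hd.two_dvd
  · exact iff_of_false (by omega) hd.not_two_dvd_nat

theorem nThree_dvd (n : ℕ) : nThree n ∣ n :=
  Nat.ordProj_dvd n 3

end Arithmetic

section MainCount

variable {F K : Type*} [Field F] [Fintype F] [Field K] [IsAlgClosed K] [Algebra F K]
  [Algebra.IsAlgebraic F K] {g h : F[X]} {θ : K}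

theorem IsTwistedCube.ncard_irredSet_mul (H : IsTwistedCube g h θ) (hq : ¬3 ∣ Fintype.card F)
    {n : ℕ} (hn : n ≠ 0) :
    ((IrredSet g h n).ncard : ℚ) * n =
      ∑ x ∈ (n / nThree n).divisors with (3 : ℤ) ∣ (-(Fintype.card F : ℤ)) ^ (n / x) - 1,
        (ArithmeticFunction.moebius x : ℚ) *
          (2 / 3 * ((Fintype.card F : ℚ) ^ (n / x) - (-1) ^ (n / x))) := by
  obtain ⟨k, hk⟩ := three_dvd_pow_two_mul_sub_one hq n
  have hroots : {a : K | minpoly F a ∈ IrredSet g h n} = {a | (minpoly F a).natDegree = n ∧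
      (quadraticCoord F θ a ≠ 0 ∧ quadraticCoord F θ a ^ k ≠ 1)} := by
    ext a
    have ha : IsIntegral F a := Algebra.IsIntegral.isIntegral a
    simp only [IrredSet, Set.mem_ofPred_eq, minpoly.monic ha, minpoly.irreducible ha, true_and]
    refine and_congr_right fun hdeg ↦ H.irreducible_iff_quadraticCoord ?_
    rw [hdeg, hk]
  have hmoebius := ncard_natDegree_minpoly_eq_sum_moebius (F := F) (K := K)
    (fun a ↦ quadraticCoord F θ a ≠ 0 ∧ quadraticCoord F θ a ^ k ≠ 1) hn
  rw [← hroots, ncard_setOf_minpoly_mem (fun f hf ↦ ⟨hf.1, hf.2.1, hf.2.2.1⟩)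
    ((finite_setOf_natDegree_eq F n).subset fun f hf ↦ hf.2.2.1), Nat.cast_mul] at hmoebius
  rw [hmoebius, nThree, ← filter_not_prime_dvd_divisors Nat.prime_three hn, Finset.filter_filter,
    Finset.sum_filter]
  refine Finset.sum_congr rfl fun x hx ↦ ?_
  have hxn := Nat.dvd_of_mem_divisors hx
  have hd : n / x ≠ 0 := (Nat.div_ne_zero_iff_of_dvd hxn).2 ⟨hn, ne_zero_of_dvd_ne_zero hn hxn⟩
  have hpow : ((-(Fintype.card F : ℤ)) ^ (n / x)) ^ (2 * x) - 1 = (3 : ℕ) * (k : ℤ) := by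
    rw [← pow_mul, mul_left_comm, Nat.div_mul_cancel hxn, (even_two_mul n).neg_pow,
      ← Nat.cast_mul, ← hk, Nat.cast_pred (by positivity), Nat.cast_pow]
  have hthree : 3 ∣ 2 * x ↔ 3 ∣ x := (by decide : Nat.Coprime 3 2).dvd_mul_left
  rw [ncard_fixed_quadraticCoord_pow_ne_one H.pow_card_ne H.pow_card_sq hd,
    natAbs_sub_gcd_eq_ite Nat.prime_three hpow, natAbs_neg_pow_sub_one Fintype.card_ne_zero,
    mul_ite, mul_zero]
  simp only [hthree, Nat.cast_ofNat, and_comm]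
  norm_num

theorem IsTwistedCube.ncard_irredSet_of_card_mod_three_eq_one (H : IsTwistedCube g h θ)
    (hq : Fintype.card F % 3 = 1) {n : ℕ} (hn : n ≠ 0) :
    ((IrredSet g h n).ncard : ℚ) = (1 / (3 * (nThree n : ℚ))) *
      (IfunD n (2 * nThree n) ((Fintype.card F : ℚ) ^ (2 * nThree n)) -
        IfunD n (2 * nThree n) 1) := by
  have hodd : Nat.Coprime 2 (nThree n) := (by decide : Nat.Coprime 2 3).pow_right _
  refine mul_right_cancel₀ (Nat.cast_ne_zero.2 hn : (n : ℚ) ≠ 0) ?_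
  rw [H.ncard_irredSet_mul (by omega) hn,
    Finset.filter_congr fun x _ ↦ three_dvd_neg_pow_sub_one_iff hq (n / x),
    filter_dvd_div_divisors_div hodd hn (nThree_dvd n), IfunD, IfunD]
  split_ifs with h2
  · have hsum := sum_divisors_moebius_mul_pow_div hn h2
    have hone : (-1 : ℚ) ^ (2 * nThree n) = 1 := (even_two_mul _).neg_one_pow
    simp only [mul_sub, mul_left_comm _ (2 / 3 : ℚ), Finset.sum_sub_distrib, ← Finset.mul_sum,
      hsum, hone]
    push_cast
    field_simp
  · simp

theorem IsTwistedCube.ncard_irredSet_of_card_mod_three_eq_two (H : IsTwistedCube g h θ)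
    (hq : Fintype.card F % 3 = 2) {n : ℕ} (hn : n ≠ 0) :
    ((IrredSet g h n).ncard : ℚ) = (2 / (3 * (nThree n : ℚ))) *
      (Ifun (n / nThree n) ((Fintype.card F : ℚ) ^ nThree n) - Ifun (n / nThree n) (-1)) := by
  have hdvd (x : ℕ) : (3 : ℤ) ∣ (-(Fintype.card F : ℤ)) ^ (n / x) - 1 :=
    (show (3 : ℤ) ∣ -(Fintype.card F : ℤ) - 1 by omega).trans (sub_one_dvd_pow_sub_one _ _)
  have hone : (-1 : ℚ) ^ nThree n = -1 := (by decide : Odd 3).pow.neg_one_pow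
  have hsum := sum_divisors_moebius_mul_pow_div hn (nThree_dvd n)
  refine mul_right_cancel₀ (Nat.cast_ne_zero.2 hn : (n : ℚ) ≠ 0) ?_
  rw [H.ncard_irredSet_mul (by omega) hn, Finset.filter_true_of_mem fun x _ ↦ hdvd x]
  simp only [mul_sub, mul_left_comm _ (2 / 3 : ℚ), Finset.sum_sub_distrib, ← Finset.mul_sum,
    hsum, hone]
  field_simp

end MainCount

section ArtinSchreier

theorem pow_prime_pow_eq_add_sum {K : Type*} [CommRing K] {p : ℕ} [Fact p.Prime] [CharP K p]
    {x s : K} (hx : x ^ p = x + s) (k : ℕ) :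
    x ^ p ^ k = x + ∑ i ∈ Finset.range k, s ^ p ^ i := by
  induction k with
  | zero => simp
  | succ k ih =>
    rw [pow_succ', pow_mul, hx, add_pow_char_pow, ih, Finset.sum_range_succ, add_assoc]

theorem pow_card_eq_add_trace {F K : Type*} {p : ℕ} [Fact p.Prime] [Field F] [Fintype F]
    [Algebra (ZMod p) F] [CommRing K] [CharP K p] [Algebra F K] {x : K} {s : F}
    (hx : x ^ p = x + algebraMap F K s) :
    x ^ Fintype.card F =
      x + algebraMap F K (algebraMap (ZMod p) F (Algebra.trace (ZMod p) F s)) := by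
  rw [FiniteField.algebraMap_trace_eq_sum_pow, map_sum, Module.card_eq_pow_finrank (K := ZMod p),
    ZMod.card, pow_prime_pow_eq_add_sum hx]
  simp

theorem exists_isTwistedCube {F K : Type*} [Field F] [Fintype F] [Algebra (ZMod 2) F] [Field K]
    [CharP K 2] [IsAlgClosed K] [Algebra F K] {σ : F} (hσ : Algebra.trace (ZMod 2) F σ = 1) :
    ∃ θ : K, IsTwistedCube (X ^ 3 + C σ * X + C σ) (X ^ 2 + X + C (σ + 1)) θ := by
  set s := algebraMap F K σ with hs
  obtain ⟨θ, hroot⟩ := IsAlgClosed.exists_root (X ^ 2 - X - C s : K[X])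
    (by rw [show (X ^ 2 - X - C s : K[X]).degree = 2 by compute_degree!]; exact two_ne_zero)
  have hθs : θ ^ 2 = θ + s := by
    simp only [IsRoot, eval_sub, eval_pow, eval_X, eval_C] at hroot
    linear_combination hroot
  have hconj : θ ^ Fintype.card F = θ + 1 := by
    rw [pow_card_eq_add_trace hθs, hσ, map_one, map_one]
  refine ⟨θ, by simp [hconj], ?_, ?_⟩
  · have hfrob : (θ + 1) ^ Fintype.card F = θ ^ Fintype.card F + 1 ^ Fintype.card F :=
      map_add (FiniteField.frobeniusAlgHom F K) θ 1
    rw [sq, pow_mul, hconj, hfrob, hconj, one_pow, add_assoc, CharTwo.add_self_eq_zero, add_zero]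
  · have hC : (C θ ^ 2 : K[X]) = C θ + C s := by rw [← C_pow, hθs, C_add]
    have htwo : (2 : K[X]) = 0 := CharTwo.two_eq_zero
    simp only [Polynomial.map_add, Polynomial.map_mul, Polynomial.map_pow, Polynomial.map_one,
      map_X, map_C, ← hs, map_add, map_one]
    linear_combination (C θ * X ^ 2 - 2 * C θ * X - C s * X + C s) * htwo +
      (1 + C θ - 3 * X) * hC

end ArtinSchreier

theorem stmt15_general {F K : Type*} [Field F] [Fintype F] [Field K] [IsAlgClosed K] [Algebra F K]
    [Algebra.IsAlgebraic F K] {g h : F[X]} {θ : K} (H : IsTwistedCube g h θ) {n : ℕ} (hn : n ≠ 0) :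
    (Fintype.card F % 3 = 1 →
      ((IrredSet g h n).ncard : ℚ) =
        (1 / (3 * (nThree n : ℚ))) *
          (IfunD n (2 * nThree n) ((Fintype.card F : ℚ) ^ (2 * nThree n)) -
            IfunD n (2 * nThree n) 1)) ∧
    (Fintype.card F % 3 = 2 →
      ((IrredSet g h n).ncard : ℚ) =
        (2 / (3 * (nThree n : ℚ))) *
          (Ifun (n / nThree n) ((Fintype.card F : ℚ) ^ nThree n) - Ifun (n / nThree n) (-1))) :=
  ⟨fun hq ↦ H.ncard_irredSet_of_card_mod_three_eq_one hq hn,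
    fun hq ↦ H.ncard_irredSet_of_card_mod_three_eq_two hq hn⟩

/-- Theorem 15: over `F_q` of characteristic two, for `σ ∈ F_q` of absolute trace `1`,
counting monic irreducible `f` of degree `n > 1` such that `f_R` is irreducible for
`R(x) = (x³ + σx + σ)/(x² + x + σ + 1)`. -/
theorem stmt15 {F : Type*} [Field F] [Fintype F] [CharP F 2] (q : ℕ)
    (hq : Fintype.card F = q) (σ : F)
    (hσ : letI : Algebra (ZMod 2) F := ZMod.algebra F 2
          Algebra.trace (ZMod 2) F σ = 1)
    (n : ℕ) (hn : 1 < n) :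
    (q % 3 = 1 →
      ((IrredSet (X ^ 3 + C σ * X + C σ) (X ^ 2 + X + C (σ + 1)) n).ncard : ℚ) =
        (1 / (3 * (nThree n : ℚ))) *
          (IfunD n (2 * nThree n) ((q : ℚ) ^ (2 * nThree n)) - IfunD n (2 * nThree n) 1)) ∧
    (q % 3 = 2 →
      ((IrredSet (X ^ 3 + C σ * X + C σ) (X ^ 2 + X + C (σ + 1)) n).ncard : ℚ) =
        (2 / (3 * (nThree n : ℚ))) *
          (Ifun (n / nThree n) ((q : ℚ) ^ nThree n) - Ifun (n / nThree n) (-1))) := by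
  let _ := ZMod.algebra F 2
  obtain ⟨θ, H⟩ := exists_isTwistedCube (K := AlgebraicClosure F) hσ
  exact hq ▸ stmt15_general H (by omega)
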